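/- arXiv:0808.0695 — 2 statements merged into one kernel-verified Lean document; each statement's English description precedes it below -/
import Mathlib

section
/- Let C1 and C2 be cubic curves in the projective plane over a field k whose intersection consists of 9 distinct k-rational points p1,...,p9 (the intersection being transverse). Then no three of p1,...,p9 lie on a line if and only if every nonzero cubic in the pencil spanned by C1 and C2 is irreducible. -/
open MvPolynomial

/-- Two nonzero vectors represent the same point of projective space. -/
def ProjEq {k : Type*} [Field k] {n : ℕ} (p q : Fin n → k) : Prop :=
  ∃ c : k, c ≠ 0 ∧ q = c • p

namespace CubicPencil

open Matrix

variable {k : Type*} [Field k]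

/-- Linear substitution: `(lin A F)(x) = F(A x)`. -/
noncomputable def lin (A : Matrix (Fin 3) (Fin 3) k) :
    MvPolynomial (Fin 3) k →ₐ[k] MvPolynomial (Fin 3) k :=
  aeval (fun i => ∑ j, C (A i j) * X j)

lemma lin_X (A : Matrix (Fin 3) (Fin 3) k) (i : Fin 3) :
    lin A (X i) = ∑ j, C (A i j) * X j := by
  simp [lin]

lemma lin_lin (A B : Matrix (Fin 3) (Fin 3) k) (F : MvPolynomial (Fin 3) k) :
    lin A (lin B F) = lin (B * A) F := by
  have : (lin A).comp (lin B) = lin (B * A) := by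
    apply MvPolynomial.algHom_ext
    intro i
    have hC : ∀ c, lin A (C c) = C c := fun c => by simp [lin, MvPolynomial.algebraMap_eq]
    simp only [AlgHom.comp_apply, lin_X, map_mul, hC, Matrix.mul_apply, Fin.sum_univ_three,
      map_add]
    ring
  exact congrArg (fun f => f F) this

lemma lin_one (F : MvPolynomial (Fin 3) k) : lin 1 F = F := by
  have : lin (1 : Matrix (Fin 3) (Fin 3) k) = AlgHom.id k _ := by
    apply MvPolynomial.algHom_ext
    intro i
    simp [lin_X, Matrix.one_apply]
  rw [this]; rfl

lemma lin_hom (A : Matrix (Fin 3) (Fin 3) k) {F : MvPolynomial (Fin 3) k} {n : ℕ}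
    (h : F.IsHomogeneous n) : (lin A F).IsHomogeneous n := by
  have := h.aeval (n := 1) (fun i => ∑ j, C (A i j) * X j) (fun i => by
    apply IsHomogeneous.sum
    intro j _
    exact isHomogeneous_C_mul_X _ _)
  simpa [lin] using this

lemma eval_map_lin {K : Type*} [Field K] (f : k →+* K) (A : Matrix (Fin 3) (Fin 3) k)
    (F : MvPolynomial (Fin 3) k) (x : Fin 3 → K) :
    eval x (map f (lin A F)) = eval (A.map f *ᵥ x) (map f F) := by
  induction F using MvPolynomial.induction_on with
  | C a => simp [lin, MvPolynomial.algebraMap_eq]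
  | add p q hp hq => simp [hp, hq]
  | mul_X p i hp =>
    simp only [map_mul, hp, lin_X, map_X, eval_X]
    congr 1
    simp [Matrix.mulVec, dotProduct]

lemma eval_lin (A : Matrix (Fin 3) (Fin 3) k)
    (F : MvPolynomial (Fin 3) k) (x : Fin 3 → k) :
    eval x (lin A F) = eval (A *ᵥ x) F := by
  have h := eval_map_lin (RingHom.id k) A F x
  have hA : A.map (RingHom.id k) = A := by ext; simp
  rw [hA] at h
  simpa [MvPolynomial.map_id] using h

lemma pderiv_lin (A : Matrix (Fin 3) (Fin 3) k)
    (F : MvPolynomial (Fin 3) k) (b : Fin 3) :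
    pderiv b (lin A F) = ∑ a, C (A a b) * lin A (pderiv a F) := by
  induction F using MvPolynomial.induction_on with
  | C a => simp [lin, MvPolynomial.algebraMap_eq]
  | add p q hp hq => simp [hp, hq, mul_add, Finset.sum_add_distrib]
  | mul_X p i hp =>
    have h1 : pderiv b (lin A (X i)) = C (A i b) := by
      rw [lin_X]
      simp [pderiv_X, Derivation.leibniz, Pi.single_apply]
    have h2 : ∀ a, lin A (pderiv a (p * X i)) =
        lin A p * (if a = i then 1 else 0) + lin A (X i) * lin A (pderiv a p) := by
      intro a
      rw [Derivation.leibniz, pderiv_X]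
      by_cases h : a = i
      · subst h; simp
      · simp [h, Ne.symm h]
    rw [map_mul, Derivation.leibniz, h1, hp]
    simp only [h2, smul_eq_mul, mul_add, Finset.sum_add_distrib, Finset.mul_sum]
    congr 1
    · simp [mul_comm]
    · apply Finset.sum_congr rfl; intros; ring

/-- The binary cubic with given coefficients. -/
noncomputable def bin (c : Fin 4 → k) : MvPolynomial (Fin 3) k :=
  C (c 0) * X 0 ^ 3 + C (c 1) * X 0 ^ 2 * X 1 + C (c 2) * X 0 * X 1 ^ 2 + C (c 3) * X 1 ^ 3

lemma exists_bin {H : MvPolynomial (Fin 3) k} (hH : H.IsHomogeneous 3) :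
    ∃ (c : Fin 4 → k) (Q : MvPolynomial (Fin 3) k), H = bin c + X 2 * Q := by
  rw [H.as_sum]
  apply Finset.sum_induction _
    (fun H => ∃ (c : Fin 4 → k) (Q : MvPolynomial (Fin 3) k), H = bin c + X 2 * Q)
  · rintro _ _ ⟨c, Q, rfl⟩ ⟨c', Q', rfl⟩
    refine ⟨c + c', Q + Q', ?_⟩
    simp only [bin, Pi.add_apply, map_add]
    ring
  · exact ⟨0, 0, by simp [bin]⟩
  · intro d hd
    have hdeg := hH.degree_eq_sum_deg_support hd
    have h3 : d 0 + d 1 + d 2 = 3 := by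
      have h := hdeg.symm
      rw [Finset.sum_subset (Finset.subset_univ d.support) (by simp), Fin.sum_univ_three] at h
      exact h
    have hm : monomial d (coeff d H) = C (coeff d H) * X 0 ^ d 0 * X 1 ^ d 1 * X 2 ^ d 2 := by
      rw [monomial_eq, Finsupp.prod_fintype _ _ (by simp), Fin.prod_univ_three]
      ring
    rw [hm]
    generalize coeff d H = r
    by_cases h2 : d 2 = 0
    · rw [h2] at h3 ⊢
      have : d 1 ≤ 3 := by omega
      have h0 : d 0 = 3 - d 1 := by omega
      rw [h0]
      interval_cases d 1
      · exact ⟨![r, 0, 0, 0], 0, by simp [bin]⟩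
      · exact ⟨![0, r, 0, 0], 0, by simp [bin]⟩
      · exact ⟨![0, 0, r, 0], 0, by simp [bin]⟩
      · exact ⟨![0, 0, 0, r], 0, by simp [bin]⟩
    · obtain ⟨m, hm⟩ := Nat.exists_eq_succ_of_ne_zero h2
      refine ⟨0, C r * X 0 ^ d 0 * X 1 ^ d 1 * X 2 ^ m, ?_⟩
      rw [hm]
      simp only [bin, Pi.zero_apply, map_zero, Nat.succ_eq_add_one]
      ring

lemma hom_factor_aux {f g : MvPolynomial (Fin 3) k} (hf : f.totalDegree = 1)
    (hg : g.totalDegree = 2) (h : (f * g).IsHomogeneous 3) :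
    ∃ L Q : MvPolynomial (Fin 3) k, L.IsHomogeneous 1 ∧ f * g = L * Q := by
  have hf' := sum_homogeneousComponent f
  have hg' := sum_homogeneousComponent g
  rw [hf] at hf'
  rw [hg] at hg'
  simp only [Finset.sum_range_succ, Finset.range_zero, Finset.sum_empty, zero_add] at hf' hg'
  have hi := fun n => homogeneousComponent_isHomogeneous n f
  have hj := fun n => homogeneousComponent_isHomogeneous n g
  refine ⟨homogeneousComponent 1 f, homogeneousComponent 2 g, hi 1, ?_⟩
  rw [← homogeneousComponent_eq_self h]
  have e : f * g = homogeneousComponent 0 f * homogeneousComponent 0 g +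
      homogeneousComponent 0 f * homogeneousComponent 1 g +
      homogeneousComponent 0 f * homogeneousComponent 2 g +
      homogeneousComponent 1 f * homogeneousComponent 0 g +
      homogeneousComponent 1 f * homogeneousComponent 1 g +
      homogeneousComponent 1 f * homogeneousComponent 2 g := by
    conv_lhs => rw [← hf', ← hg']
    ring
  have z : ∀ a b, homogeneousComponent 3 (homogeneousComponent a f * homogeneousComponent b g) =
      if 3 = a + b then homogeneousComponent a f * homogeneousComponent b g else 0 :=
    fun a b => homogeneousComponent_of_mem ((hi a).mul (hj b))
  conv_lhs => rw [e]
  simp only [map_add, z]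
  norm_num

lemma hom_factor {f g : MvPolynomial (Fin 3) k} (hf : ¬ IsUnit f) (hg : ¬ IsUnit g)
    (h0 : f * g ≠ 0) (h : (f * g).IsHomogeneous 3) :
    ∃ L Q : MvPolynomial (Fin 3) k, L.IsHomogeneous 1 ∧ f * g = L * Q := by
  have hf0 : f ≠ 0 := left_ne_zero_of_mul h0
  have hg0 : g ≠ 0 := right_ne_zero_of_mul h0
  have hd := totalDegree_mul_of_isDomain hf0 hg0
  rw [h.totalDegree h0] at hd
  have key : ∀ f : MvPolynomial (Fin 3) k, ¬ IsUnit f → f ≠ 0 → f.totalDegree ≠ 0 := by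
    intro f hf hf0 hd
    apply hf
    rw [totalDegree_eq_zero_iff_eq_C] at hd
    rw [hd]
    refine IsUnit.map C (IsUnit.mk0 _ ?_)
    intro hc
    rw [hc] at hd
    exact hf0 (by simpa using hd)
  have h1 := key f hf hf0
  have h2 := key g hg hg0
  have : (f.totalDegree = 1 ∧ g.totalDegree = 2) ∨ (g.totalDegree = 1 ∧ f.totalDegree = 2) := by
    omega
  rcases this with ⟨a, b⟩ | ⟨a, b⟩
  · exact hom_factor_aux a b h
  · rw [mul_comm] at h ⊢
    exact hom_factor_aux a b h

lemma exists_matrix_of_linear {L : MvPolynomial (Fin 3) k} (hL : L.IsHomogeneous 1) (h0 : L ≠ 0) :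
    ∃ B : Matrix (Fin 3) (Fin 3) k, IsUnit B.det ∧ L = lin B (X 2) := by
  have hm : L ∈ homogeneousSubmodule (Fin 3) k 1 := hL
  rw [homogeneousSubmodule_one_eq_span_X] at hm
  rw [Submodule.mem_span_range_iff_exists_fun] at hm
  obtain ⟨l, rfl⟩ := hm
  have hne : l ≠ 0 := by
    rintro rfl
    simp at h0
  have hX : ∀ B : Matrix (Fin 3) (Fin 3) k, B 2 = l → ∑ i, l i • X i = lin B (X 2) := by
    intro B hB
    simp [lin_X, hB, smul_eq_C_mul]
  by_cases h2 : l 2 = 0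
  · by_cases h1 : l 1 = 0
    · have hl : l 0 ≠ 0 := by
        intro h
        apply hne
        ext i; fin_cases i <;> simp [h, h1, h2]
      refine ⟨Matrix.of ![![0, 1, 0], ![0, 0, 1], l], ?_, hX _ rfl⟩
      rw [isUnit_iff_ne_zero, Matrix.det_fin_three]
      simp [hl]
    · refine ⟨Matrix.of ![![1, 0, 0], ![0, 0, 1], l], ?_, hX _ rfl⟩
      rw [isUnit_iff_ne_zero, Matrix.det_fin_three]
      simp [h1]
  · refine ⟨Matrix.of ![![1, 0, 0], ![0, 1, 0], l], ?_, hX _ rfl⟩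
    rw [isUnit_iff_ne_zero, Matrix.det_fin_three]
    simp [h2]

lemma exists_root_cubic {K : Type*} [Field K] [IsAlgClosed K] (c0 c1 c2 c3 : K) :
    ∃ s t : K, (s ≠ 0 ∨ t ≠ 0) ∧
      c0 * s ^ 3 + c1 * s ^ 2 * t + c2 * s * t ^ 2 + c3 * t ^ 3 = 0 := by
  by_cases h : c3 = 0
  · exact ⟨0, 1, by simp, by simp [h]⟩
  · have hd : (Polynomial.C c3 * Polynomial.X ^ 3 + Polynomial.C c2 * Polynomial.X ^ 2 +
        Polynomial.C c1 * Polynomial.X + Polynomial.C c0).degree ≠ 0 := by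
      rw [Polynomial.degree_cubic h]
      decide
    obtain ⟨t, ht⟩ := IsAlgClosed.exists_root _ hd
    refine ⟨1, t, by simp, ?_⟩
    simp [Polynomial.IsRoot] at ht
    linear_combination ht

lemma exists_root_quadratic {K : Type*} [Field K] [IsAlgClosed K] (c0 c1 c2 : K) :
    ∃ s t : K, (s ≠ 0 ∨ t ≠ 0) ∧ c0 * s ^ 2 + c1 * s * t + c2 * t ^ 2 = 0 := by
  by_cases h : c2 = 0
  · exact ⟨0, 1, by simp, by simp [h]⟩
  · have hd : (Polynomial.C c2 * Polynomial.X ^ 2 +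
        Polynomial.C c1 * Polynomial.X + Polynomial.C c0).degree ≠ 0 := by
      rw [Polynomial.degree_quadratic h]
      decide
    obtain ⟨t, ht⟩ := IsAlgClosed.exists_root _ hd
    refine ⟨1, t, by simp, ?_⟩
    simp [Polynomial.IsRoot] at ht
    linear_combination ht

lemma exists_root_linear {K : Type*} [Field K] (c0 c1 : K) :
    ∃ s t : K, (s ≠ 0 ∨ t ≠ 0) ∧ c0 * s + c1 * t = 0 := by
  by_cases h : c1 = 0
  · exact ⟨0, 1, by simp, by simp [h]⟩
  · exact ⟨c1, -c0, by simp [h], by ring⟩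

lemma factor_cubic {x y c0 c1 c2 c3 : k} (h0 : x ≠ 0 ∨ y ≠ 0)
    (h : c0 * x ^ 3 + c1 * x ^ 2 * y + c2 * x * y ^ 2 + c3 * y ^ 3 = 0) :
    ∃ d0 d1 d2, c0 = y * d0 ∧ c1 = y * d1 - x * d0 ∧ c2 = y * d2 - x * d1 ∧ c3 = - x * d2 := by
  rcases h0 with h0 | h0
  · refine ⟨-(c1 - y * (-(c2 - y * (-c3 / x)) / x)) / x, -(c2 - y * (-c3 / x)) / x, -c3 / x,
      ?_, ?_, ?_, ?_⟩
    · field_simp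
      linear_combination h
    all_goals (field_simp; try ring)
  · refine ⟨c0 / y, (c1 + x * (c0 / y)) / y, (c2 + x * ((c1 + x * (c0 / y)) / y)) / y,
      ?_, ?_, ?_, ?_⟩
    · field_simp
    · field_simp; ring
    · field_simp; ring
    · field_simp
      linear_combination h

lemma factor_quadratic {x y c0 c1 c2 : k} (h0 : x ≠ 0 ∨ y ≠ 0)
    (h : c0 * x ^ 2 + c1 * x * y + c2 * y ^ 2 = 0) :
    ∃ d0 d1, c0 = y * d0 ∧ c1 = y * d1 - x * d0 ∧ c2 = - x * d1 := by
  rcases h0 with h0 | h0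
  · refine ⟨-(c1 - y * (-c2 / x)) / x, -c2 / x, ?_, ?_, ?_⟩
    · field_simp
      linear_combination h
    all_goals (field_simp; try ring)
  · refine ⟨c0 / y, (c1 + x * (c0 / y)) / y, ?_, ?_, ?_⟩
    · field_simp
    · field_simp; ring
    · field_simp
      linear_combination h

lemma binary {K : Type*} [Field K] [IsAlgClosed K] (φ : k →+* K) (c0 c1 c2 c3 : k)
    {ι : Type*} (x y : ι → k) (S : ι → Prop)
    (hroot : ∀ s t : K, (s ≠ 0 ∨ t ≠ 0) →
      φ c0 * s ^ 3 + φ c1 * s ^ 2 * t + φ c2 * s * t ^ 2 + φ c3 * t ^ 3 = 0 →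
      ∃ i, S i ∧ ∃ r : K, r ≠ 0 ∧ s = r * φ (x i) ∧ t = r * φ (y i))
    (hsimple : ∀ i, S i →
      c0 * 3 * x i ^ 2 + c1 * 2 * x i * y i + c2 * y i ^ 2 = 0 →
      c1 * x i ^ 2 + c2 * 2 * x i * y i + c3 * 3 * y i ^ 2 = 0 → False) :
    ∃ i j l, i ≠ j ∧ j ≠ l ∧ i ≠ l ∧ S i ∧ S j ∧ S l := by
  have nz : ∀ (i : ι) (s t r : K), (s ≠ 0 ∨ t ≠ 0) → s = r * φ (x i) → t = r * φ (y i) →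
      (x i ≠ 0 ∨ y i ≠ 0) := by
    rintro i s t r hst rfl rfl
    by_contra! hc
    simp [hc.1, hc.2] at hst
  obtain ⟨s, t, hst, he⟩ := exists_root_cubic (φ c0) (φ c1) (φ c2) (φ c3)
  obtain ⟨i, hi, r, hr, hs, ht⟩ := hroot s t hst he
  have hxi := nz i s t r hst hs ht
  have hci : c0 * x i ^ 3 + c1 * x i ^ 2 * y i + c2 * x i * y i ^ 2 + c3 * y i ^ 3 = 0 := by
    apply φ.injective
    apply mul_left_cancel₀ (pow_ne_zero 3 hr)
    rw [hs, ht] at he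
    simp only [map_add, map_mul, map_pow, map_zero, mul_zero]
    linear_combination he
  obtain ⟨d0, d1, d2, e0, e1, e2, e3⟩ := factor_cubic hxi hci
  obtain ⟨s, t, hst, he⟩ := exists_root_quadratic (φ d0) (φ d1) (φ d2)
  obtain ⟨j, hj, r, hr, hs, ht⟩ := hroot s t hst (by
    rw [e0, e1, e2, e3]
    simp only [map_sub, map_mul, map_neg]
    linear_combination (φ (y i) * s - φ (x i) * t) * he)
  have hxj := nz j s t r hst hs ht
  have hcj : d0 * x j ^ 2 + d1 * x j * y j + d2 * y j ^ 2 = 0 := by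
    apply φ.injective
    apply mul_left_cancel₀ (pow_ne_zero 2 hr)
    rw [hs, ht] at he
    simp only [map_add, map_mul, map_pow, map_zero, mul_zero]
    linear_combination he
  have hij : i ≠ j := by
    rintro rfl
    apply hsimple i hi
    · rw [e0, e1, e2]
      linear_combination y i * hcj
    · rw [e1, e2, e3]
      linear_combination (- x i) * hcj
  obtain ⟨f0, f1, g0, g1, g2⟩ := factor_quadratic hxj hcj
  obtain ⟨s, t, hst, he⟩ := exists_root_linear (φ f0) (φ f1)
  obtain ⟨l, hl, r, hr, hs, ht⟩ := hroot s t hst (by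
    rw [e0, e1, e2, e3, g0, g1, g2]
    simp only [map_sub, map_mul, map_neg]
    linear_combination (φ (y i) * s - φ (x i) * t) * (φ (y j) * s - φ (x j) * t) * he)
  have hcl : f0 * x l + f1 * y l = 0 := by
    apply φ.injective
    apply mul_left_cancel₀ hr
    rw [hs, ht] at he
    simp only [map_add, map_mul, map_zero, mul_zero]
    linear_combination he
  refine ⟨i, j, l, hij, ?_, ?_, hi, hj, hl⟩
  · rintro rfl
    apply hsimple j hj
    · rw [e0, e1, e2, g0, g1, g2]
      linear_combination (y i * x j - x i * y j) * y j * hcl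
    · rw [e1, e2, e3, g0, g1, g2]
      linear_combination (y i * x j - x i * y j) * (-x j) * hcl
  · rintro rfl
    apply hsimple i hi
    · rw [e0, e1, e2, g0, g1, g2]
      linear_combination (y j * x i - x j * y i) * y i * hcl
    · rw [e1, e2, e3, g0, g1, g2]
      linear_combination (y j * x i - x j * y i) * (-x i) * hcl

lemma core {K : Type*} [Field K] [IsAlgClosed K] (φ : k →+* K)
    (G H : MvPolynomial (Fin 3) k) (hH : H.IsHomogeneous 3) (hG : X 2 ∣ G)
    {ι : Type*} (q : ι → Fin 3 → k)
    (hall : ∀ x : Fin 3 → K, x ≠ 0 → eval x (map φ G) = 0 → eval x (map φ H) = 0 →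
      ∃ i, ∃ r : K, r ≠ 0 ∧ x = r • (fun j => φ (q i j)))
    (htr : ∀ i α β, (∀ a, α * eval (q i) (pderiv a G) + β * eval (q i) (pderiv a H) = 0) →
      α = 0 ∧ β = 0) :
    ∃ i j l, i ≠ j ∧ j ≠ l ∧ i ≠ l ∧ q i 2 = 0 ∧ q j 2 = 0 ∧ q l 2 = 0 := by
  obtain ⟨Q, rfl⟩ := hG
  obtain ⟨c, R, rfl⟩ := exists_bin hH
  apply binary φ (c 0) (c 1) (c 2) (c 3) (fun i => q i 0) (fun i => q i 1) (fun i => q i 2 = 0)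
  · intro s t hst he
    obtain ⟨i, r, hr, hx⟩ := hall ![s, t, 0] (by
        intro h
        have h0 := congrFun h 0
        have h1 := congrFun h 1
        simp at h0 h1
        simp [h0, h1] at hst) (by simp) (by simpa [bin] using he)
    have h0 := congrFun hx 0
    have h1 := congrFun hx 1
    have h2 := congrFun hx 2
    simp [hr] at h0 h1 h2
    exact ⟨i, h2, r, hr, h0, h1⟩
  · intro i hi h0 h1
    have a0 : eval (q i) (pderiv 0 (X 2 * Q)) = 0 := by
      simp [Derivation.leibniz, hi]
    have a1 : eval (q i) (pderiv 1 (X 2 * Q)) = 0 := by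
      simp [Derivation.leibniz, hi]
    have b0 : eval (q i) (pderiv 0 (bin c + X 2 * R)) = 0 := by
      simp [Derivation.leibniz, hi, bin, Derivation.leibniz_pow]
      linear_combination h0
    have b1 : eval (q i) (pderiv 1 (bin c + X 2 * R)) = 0 := by
      simp [Derivation.leibniz, hi, bin, Derivation.leibniz_pow]
      linear_combination h1
    by_cases hz : eval (q i) (pderiv 2 (X 2 * Q)) = 0
    · have := htr i 1 0 (by
        intro a
        fin_cases a
        · simp [hi]
        · simp [hi]
        · simp only [Fin.reduceFinMk, hz]; simp)
      simp at this
    · have := htr i (eval (q i) (pderiv 2 (bin c + X 2 * R))) (-eval (q i) (pderiv 2 (X 2 * Q))) (by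
        intro a
        fin_cases a
        · simp only [Fin.zero_eta, a0, b0]; simp
        · simp only [Fin.mk_one, a1, b1]; simp
        · simp only [Fin.reduceFinMk]; ring)
      exact hz (neg_eq_zero.mp this.2)

lemma not_unit_of_hom {G : MvPolynomial (Fin 3) k} (hG : G.IsHomogeneous 3) (h0 : G ≠ 0) :
    ¬ IsUnit G := by
  intro h
  have h1 := (isUnit_iff_totalDegree_of_isReduced.mp h).2
  rw [hG.totalDegree h0] at h1
  omega

lemma forward {K : Type*} [Field K] [IsAlgClosed K] (φ : k →+* K)
    (G H : MvPolynomial (Fin 3) k) (hG : G.IsHomogeneous 3) (hH : H.IsHomogeneous 3)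
    (hirr : ¬ Irreducible G)
    {ι : Type*} [Nonempty ι] (p : ι → Fin 3 → k)
    (hall : ∀ x : Fin 3 → K, x ≠ 0 → eval x (map φ G) = 0 → eval x (map φ H) = 0 →
      ∃ i, ∃ r : K, r ≠ 0 ∧ x = r • (fun j => φ (p i j)))
    (htr : ∀ i α β, (∀ a, α * eval (p i) (pderiv a G) + β * eval (p i) (pderiv a H) = 0) →
      α = 0 ∧ β = 0) :
    ∃ i j l, i ≠ j ∧ j ≠ l ∧ i ≠ l ∧ Matrix.det (Matrix.of ![p i, p j, p l]) = 0 := by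
  have hG0 : G ≠ 0 := by
    rintro rfl
    have := htr (Classical.arbitrary ι) 1 0 (by simp)
    simp at this
  have hfac : ∃ f g, ¬ IsUnit f ∧ ¬ IsUnit g ∧ G = f * g := by
    by_contra! hc
    apply hirr
    refine ⟨not_unit_of_hom hG hG0, ?_⟩
    intro f g hfg
    by_contra! hn
    exact hc f g hn.1 hn.2 hfg
  have hfac' : ∃ L Q : MvPolynomial (Fin 3) k, L.IsHomogeneous 1 ∧ G = L * Q := by
    obtain ⟨f, g, hf, hg, rfl⟩ := hfac
    exact hom_factor hf hg hG0 hG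
  obtain ⟨L, Q, hL, hLQ⟩ := hfac'
  have hL0 : L ≠ 0 := by
    rintro rfl
    exact hG0 (by simp [hLQ])
  obtain ⟨B, hB, rfl⟩ := exists_matrix_of_linear hL hL0
  have hBA : B * B⁻¹ = 1 := Matrix.mul_nonsing_inv B hB
  have hAB : B⁻¹ * B = 1 := Matrix.nonsing_inv_mul B hB
  generalize B⁻¹ = A at hBA hAB
  have hBA' : B.map φ * A.map φ = 1 := by
    rw [← Matrix.map_mul, hBA]; simp
  have hq : ∀ i, A *ᵥ (B *ᵥ p i) = p i := by
    intro i; rw [Matrix.mulVec_mulVec, hAB, Matrix.one_mulVec]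
  obtain ⟨i, j, l, hij, hjl, hil, h1, h2, h3⟩ :=
    core φ (lin A G) (lin A H) (lin_hom A hH)
      (by rw [hLQ, map_mul, lin_lin, hBA, lin_one]; exact dvd_mul_right _ _)
      (fun i => B *ᵥ p i)
      (by
        intro x hx e1 e2
        rw [eval_map_lin] at e1 e2
        have hx' : B.map φ *ᵥ (A.map φ *ᵥ x) = x := by
          rw [Matrix.mulVec_mulVec, hBA', Matrix.one_mulVec]
        obtain ⟨i, r, hr, he⟩ := hall _ (by
          intro h
          rw [h] at hx'
          exact hx (by rw [← hx']; simp)) e1 e2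
        refine ⟨i, r, hr, ?_⟩
        rw [← hx', he, Matrix.mulVec_smul]
        congr 1
        ext j
        simp [Matrix.mulVec, dotProduct])
      (by
        intro i α β h
        apply htr i
        have hv : (fun a => α * eval (p i) (pderiv a G) +
            β * eval (p i) (pderiv a H)) ᵥ* A = 0 := by
          ext b
          rw [Pi.zero_apply, ← h b]
          simp only [pderiv_lin, map_sum, map_mul (eval _), eval_C, eval_lin, hq, Matrix.vecMul,
            dotProduct, Finset.mul_sum, ← Finset.sum_add_distrib]
          apply Finset.sum_congr rfl
          intros
          ring
        have hv2 := congrArg (fun v => v ᵥ* B) hv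
        simp only [Matrix.vecMul_vecMul, hAB, Matrix.vecMul_one, Matrix.zero_vecMul] at hv2
        exact fun a => congrFun hv2 a)
  refine ⟨i, j, l, hij, hjl, hil, ?_⟩
  rw [← Matrix.exists_mulVec_eq_zero_iff]
  refine ⟨B 2, ?_, ?_⟩
  · intro h
    apply hB.ne_zero
    exact Matrix.det_eq_zero_of_row_eq_zero 2 (fun j => congrFun h j)
  · simp only [Matrix.mulVec, dotProduct, Fin.sum_univ_three] at h1 h2 h3
    ext m
    fin_cases m
    · simp [Matrix.mulVec, dotProduct, Fin.sum_univ_three]; linear_combination h1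
    · simp [Matrix.mulVec, dotProduct, Fin.sum_univ_three]; linear_combination h2
    · simp [Matrix.mulVec, dotProduct, Fin.sum_univ_three]; linear_combination h3

lemma eq_zero_of_not_projEq {x y : Fin 3 → k} (hx : x ≠ 0) (hy : y ≠ 0) (h : ¬ ProjEq x y)
    {a b : k} (hab : ∀ m, a * x m + b * y m = 0) : a = 0 ∧ b = 0 := by
  by_cases hb : b = 0
  · subst hb
    refine ⟨?_, rfl⟩
    by_contra ha
    apply hx
    ext m
    simpa [ha] using hab m
  · exfalso
    by_cases ha : a = 0
    · subst ha
      apply hy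
      ext m
      simpa [hb] using hab m
    · apply h
      refine ⟨-a / b, by simp [ha, hb], ?_⟩
      ext m
      have := hab m
      simp only [Pi.smul_apply, smul_eq_mul]
      field_simp
      linear_combination this

lemma exists_third {u v : Fin 3 → k}
    (h : ∀ a b : k, (∀ m, a * u m + b * v m = 0) → a = 0 ∧ b = 0) :
    ∃ A : Matrix (Fin 3) (Fin 3) k, IsUnit A.det ∧ (∀ m, A m 0 = u m) ∧ (∀ m, A m 1 = v m) := by
  by_contra! hc
  have key : ∀ w : Fin 3 → k, u 0 * v 1 * w 2 - u 0 * w 1 * v 2 - v 0 * u 1 * w 2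
      + v 0 * w 1 * u 2 + w 0 * u 1 * v 2 - w 0 * v 1 * u 2 = 0 := by
    intro w
    by_contra hw
    obtain ⟨m, hm⟩ := hc (Matrix.of ![![u 0, v 0, w 0], ![u 1, v 1, w 1], ![u 2, v 2, w 2]]) (by
      rw [isUnit_iff_ne_zero, Matrix.det_fin_three]
      simpa using hw) (by intro m; fin_cases m <;> rfl)
    apply hm
    fin_cases m <;> rfl
  have k0 := key ![1, 0, 0]
  have k1 := key ![0, 1, 0]
  have k2 := key ![0, 0, 1]
  simp at k0 k1 k2
  have hv : ∀ m, v m = 0 := by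
    intro m
    refine (h (v m) (-u m) ?_).1
    intro n
    fin_cases m <;> fin_cases n <;> simp <;> grind
  have := h 0 1 (by simp [hv])
  simp at this

lemma backward (F₁ F₂ : MvPolynomial (Fin 3) k)
    (hF₁ : F₁.IsHomogeneous 3) (hF₂ : F₂.IsHomogeneous 3) (u v w : Fin 3 → k)
    (hu : u ≠ 0) (hv : v ≠ 0) (hw : w ≠ 0)
    (huv : ¬ ProjEq u v) (huw : ¬ ProjEq u w) (hvw : ¬ ProjEq v w)
    (hdet : Matrix.det (Matrix.of ![u, v, w]) = 0)
    (u1 : eval u F₁ = 0) (u2 : eval u F₂ = 0) (v1 : eval v F₁ = 0) (v2 : eval v F₂ = 0)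
    (w1 : eval w F₁ = 0) (w2 : eval w F₂ = 0) :
    ∃ a b : k, ¬(a = 0 ∧ b = 0) ∧ ¬ Irreducible (a • F₁ + b • F₂) := by
  obtain ⟨n, hn0, hn⟩ := Matrix.exists_vecMul_eq_zero_iff.mpr hdet
  have hn' : ∀ m, n 0 * u m + n 1 * v m + n 2 * w m = 0 := by
    intro m
    have := congrFun hn m
    simpa [Matrix.vecMul, dotProduct, Fin.sum_univ_three] using this
  have hne : n 0 ≠ 0 ∧ n 1 ≠ 0 ∧ n 2 ≠ 0 := by
    have fin : n 0 = 0 → n 1 = 0 → n 2 = 0 → False := by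
      intro a b c
      apply hn0
      ext m
      fin_cases m
      · exact a
      · exact b
      · exact c
    refine ⟨fun h => ?_, fun h => ?_, fun h => ?_⟩
    · have := eq_zero_of_not_projEq hv hw hvw (a := n 1) (b := n 2)
        (fun m => by have := hn' m; rw [h] at this; linear_combination this)
      exact fin h this.1 this.2
    · have := eq_zero_of_not_projEq hu hw huw (a := n 0) (b := n 2)
        (fun m => by have := hn' m; rw [h] at this; linear_combination this)
      exact fin this.1 h this.2
    · have := eq_zero_of_not_projEq hu hv huv (a := n 0) (b := n 1)
        (fun m => by have := hn' m; rw [h] at this; linear_combination this)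
      exact fin this.1 this.2 h
  obtain ⟨A, hA, hA0, hA1⟩ := exists_third (u := u) (v := v)
    (fun a b h => eq_zero_of_not_projEq hu hv huv h)
  have hAB : A * A⁻¹ = 1 := Matrix.mul_nonsing_inv A hA
  have hBA : A⁻¹ * A = 1 := Matrix.nonsing_inv_mul A hA
  generalize A⁻¹ = B at hBA hAB
  have hmv : ∀ s t : k, A *ᵥ ![s, t, 0] = fun m => s * u m + t * v m := by
    intro s t
    ext m
    simp [Matrix.mulVec, dotProduct, Fin.sum_univ_three, hA0, hA1]
    ring
  have e0 : A *ᵥ ![1, 0, 0] = u := by rw [hmv]; simp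
  have e1 : A *ᵥ ![0, 1, 0] = v := by rw [hmv]; simp
  have e2 : A *ᵥ ![-n 0 / n 2, -n 1 / n 2, 0] = w := by
    rw [hmv]
    ext m
    have := hn' m
    have := hne.2.2
    field_simp
    linear_combination - hn' m
  obtain ⟨c, Q₁, hc⟩ := exists_bin (lin_hom A hF₁)
  obtain ⟨d, Q₂, hd⟩ := exists_bin (lin_hom A hF₂)
  rw [← e0, ← eval_lin] at u1 u2
  rw [← e1, ← eval_lin] at v1 v2
  rw [← e2, ← eval_lin] at w1 w2
  rw [hc] at u1 v1 w1
  rw [hd] at u2 v2 w2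
  simp [bin] at u1 u2 v1 v2 w1 w2
  obtain ⟨z0, z1, z2⟩ := hne
  have r1 : c 1 * n 0 + c 2 * n 1 = 0 := by
    rw [u1, v1] at w1
    have h : n 0 * n 1 ≠ 0 := mul_ne_zero z0 z1
    apply mul_left_cancel₀ h
    field_simp at w1
    linear_combination -w1
  have r2 : d 1 * n 0 + d 2 * n 1 = 0 := by
    rw [u2, v2] at w2
    have h : n 0 * n 1 ≠ 0 := mul_ne_zero z0 z1
    apply mul_left_cancel₀ h
    field_simp at w2
    linear_combination -w2
  obtain ⟨a, b, hab, hz⟩ : ∃ a b : k, ¬(a = 0 ∧ b = 0) ∧ a * c 1 + b * d 1 = 0 := by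
    by_cases h : d 1 = 0
    · exact ⟨0, 1, by simp, by simp [h]⟩
    · exact ⟨d 1, -c 1, by simp [h], by ring⟩
  have hz' : a * c 2 + b * d 2 = 0 := by
    apply mul_left_cancel₀ z1
    linear_combination a * r1 + b * r2 - n 0 * hz
  refine ⟨a, b, hab, fun hirr => ?_⟩
  have hE : lin A (a • F₁ + b • F₂) = X 2 * (a • Q₁ + b • Q₂) := by
    have hz1 := congrArg (C (σ := Fin 3)) hz
    have hz2 := congrArg (C (σ := Fin 3)) hz'
    simp only [map_add, map_mul, map_zero] at hz1 hz2
    rw [map_add, map_smul, map_smul, hc, hd]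
    simp only [bin, u1, u2, v1, v2, smul_eq_C_mul, map_zero]
    linear_combination X 0 ^ 2 * X 1 * hz1 + X 0 * X 1 ^ 2 * hz2
  have hhom : (a • F₁ + b • F₂).IsHomogeneous 3 := by
    rw [smul_eq_C_mul, smul_eq_C_mul]
    exact (hF₁.C_mul a).add (hF₂.C_mul b)
  have hF : a • F₁ + b • F₂ = lin B (X 2) * lin B (a • Q₁ + b • Q₂) := by
    rw [← map_mul, ← hE, lin_lin, hAB, lin_one]
  rcases hirr.isUnit_or_isUnit hF with h | h
  · have h' := h.map (lin A)
    rw [lin_lin, hBA, lin_one] at h'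
    have := (isUnit_iff_totalDegree_of_isReduced.mp h').2
    simp at this
  · have h1 := (isUnit_iff_totalDegree_of_isReduced.mp h).2
    have h2 : (lin B (X 2)).IsHomogeneous 1 := lin_hom B (isHomogeneous_X k 2)
    have h3 := h2.mul (isHomogeneous_of_totalDegree_zero _ h1)
    rw [← hF] at h3
    have := h3.inj_right hhom hirr.ne_zero
    omega

end CubicPencil

/-- Let `C₁`, `C₂` be cubics in `ℙ²` over `k` whose intersection is transverse and consists of
9 distinct `k`-rational points `p₁, …, p₉` (these being all the intersection points over the
algebraic closure).  Then no three of the points lie on a line if and only if every nonzero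
cubic in the pencil spanned by `C₁` and `C₂` is irreducible. -/
theorem cubic_pencil_irreducible_iff_no_collinear_triple
    {k : Type*} [Field k]
    (F₁ F₂ : MvPolynomial (Fin 3) k)
    (hF₁ : F₁.IsHomogeneous 3) (hF₂ : F₂.IsHomogeneous 3)
    (p : Fin 9 → (Fin 3 → k)) (hp0 : ∀ i, p i ≠ 0)
    (hdist : ∀ i j, i ≠ j → ¬ ProjEq (p i) (p j))
    (hzero : ∀ i, eval (p i) F₁ = 0 ∧ eval (p i) F₂ = 0)
    (hall : ∀ q : Fin 3 → AlgebraicClosure k, q ≠ 0 →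
      eval q (map (algebraMap k (AlgebraicClosure k)) F₁) = 0 →
      eval q (map (algebraMap k (AlgebraicClosure k)) F₂) = 0 →
      ∃ i, ProjEq (fun j => algebraMap k (AlgebraicClosure k) (p i j)) q)
    (htrans : ∀ i, ∃ a b : Fin 3,
      eval (p i) (pderiv a F₁) * eval (p i) (pderiv b F₂) ≠
      eval (p i) (pderiv b F₁) * eval (p i) (pderiv a F₂)) :
    (∀ i j l : Fin 9, i ≠ j → j ≠ l → i ≠ l →
        Matrix.det (Matrix.of ![p i, p j, p l]) ≠ 0) ↔
    (∀ a b : k, ¬(a = 0 ∧ b = 0) → Irreducible (a • F₁ + b • F₂)) := by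
  have hT : ∀ i (α β : k), (∀ a, α * eval (p i) (pderiv a F₁) + β * eval (p i) (pderiv a F₂) = 0) →
      α = 0 ∧ β = 0 := by
    intro i α β h
    obtain ⟨a, b, hne⟩ := htrans i
    have ha := h a
    have hb := h b
    have hne' := sub_ne_zero.mpr hne
    constructor
    · apply (mul_eq_zero.mp _).resolve_right hne'
      linear_combination eval (p i) (pderiv b F₂) * ha - eval (p i) (pderiv a F₂) * hb
    · apply (mul_eq_zero.mp _).resolve_right hne'
      linear_combination eval (p i) (pderiv a F₁) * hb - eval (p i) (pderiv b F₁) * ha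
  constructor
  · intro hcol a b hab
    by_contra hirr
    have hG : (a • F₁ + b • F₂).IsHomogeneous 3 := by
      rw [smul_eq_C_mul, smul_eq_C_mul]
      exact (hF₁.C_mul a).add (hF₂.C_mul b)
    suffices hs : ∃ i j l, i ≠ j ∧ j ≠ l ∧ i ≠ l ∧ Matrix.det (Matrix.of ![p i, p j, p l]) = 0 by
      obtain ⟨i, j, l, h1, h2, h3, h4⟩ := hs
      exact hcol i j l h1 h2 h3 h4
    by_cases ha : a = 0
    · have hb : b ≠ 0 := fun hb => hab ⟨ha, hb⟩
      subst ha
      apply CubicPencil.forward (algebraMap k (AlgebraicClosure k)) _ F₁ hG hF₁ hirr p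
      · intro x hx e1 e2
        apply hall x hx e2
        simpa [smul_eq_C_mul, hb] using e1
      · intro i α β h
        have := hT i β (α * b) (fun m => by
          have := h m
          simp only [zero_smul, zero_add, Derivation.map_smul, smul_eval] at this
          linear_combination this)
        exact ⟨by simpa [hb] using this.2, this.1⟩
    · apply CubicPencil.forward (algebraMap k (AlgebraicClosure k)) _ F₂ hG hF₂ hirr p
      · intro x hx e1 e2
        apply hall x hx _ e2
        simpa [smul_eq_C_mul, ha, e2] using e1
      · intro i α β h
        have := hT i (α * a) (α * b + β) (fun m => by
          have := h m
          simp only [map_add, Derivation.map_smul, smul_eval] at this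
          linear_combination this)
        have hα : α = 0 := by simpa [ha] using this.1
        exact ⟨hα, by simpa [hα] using this.2⟩
  · intro hirr i j l hij hjl hil hdet
    obtain ⟨a, b, hab, hn⟩ := CubicPencil.backward F₁ F₂ hF₁ hF₂ (p i) (p j) (p l)
      (hp0 i) (hp0 j) (hp0 l) (hdist i j hij) (hdist i l hil) (hdist j l hjl) hdet
      (hzero i).1 (hzero i).2 (hzero j).1 (hzero j).2 (hzero l).1 (hzero l).2
    exact hn (hirr a b hab)
end

section
/- Let p1,...,p8 be 8 distinct points in P^3 over a field k which are the transverse intersection of three quadrics Q1, Q2, Q3. Then no four of the points lie on a plane if and only if every nonzero quadric in the net spanned by Q1, Q2, Q3 is irreducible. -/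
open MvPolynomial

namespace NetQ

variable {k : Type*} [Field k]

lemma linear_rep {F : MvPolynomial (Fin 4) k} (hF : F.IsHomogeneous 1) :
    ∃ c : Fin 4 → k, F = ∑ i, C (c i) * X i := by
  have h : F ∈ homogeneousSubmodule (Fin 4) k 1 := hF
  rw [homogeneousSubmodule_one_eq_span_X, Submodule.mem_span_range_iff_exists_fun] at h
  obtain ⟨c, hc⟩ := h
  exact ⟨c, by rw [← hc]; simp [smul_eq_C_mul]⟩

lemma quad_rep {F : MvPolynomial (Fin 4) k} (hF : F.IsHomogeneous 2) :
    ∃ M : Fin 4 → Fin 4 → k, F = ∑ i, ∑ j, C (M i j) * (X i * X j) := by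
  have h : F ∈ homogeneousSubmodule (Fin 4) k 2 := hF
  rw [← homogeneousSubmodule_one_pow, pow_two] at h
  refine Submodule.mul_induction_on h ?_ ?_
  · intro f hf g hg
    obtain ⟨c, rfl⟩ := linear_rep hf
    obtain ⟨d, rfl⟩ := linear_rep hg
    refine ⟨fun i j => c i * d j, ?_⟩
    rw [Finset.sum_mul_sum]
    refine Finset.sum_congr rfl fun i _ => Finset.sum_congr rfl fun j _ => ?_
    rw [C_mul]; ring
  · rintro _ _ ⟨M, rfl⟩ ⟨N, rfl⟩
    refine ⟨fun i j => M i j + N i j, ?_⟩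
    simp only [C_add, add_mul, Finset.sum_add_distrib]

/-- a nonzero reducible quadric is a product of two linear forms -/
lemma factor {F : MvPolynomial (Fin 4) k} (hF : F.IsHomogeneous 2) (h0 : F ≠ 0)
    (hirr : ¬ Irreducible F) :
    ∃ c d : Fin 4 → k, F = (∑ i, C (c i) * X i) * (∑ i, C (d i) * X i) := by
  have hdeg := hF.totalDegree h0
  have unit_of : ∀ G : MvPolynomial (Fin 4) k, G ≠ 0 → G.totalDegree = 0 → IsUnit G := by
    intro G hG h
    rw [totalDegree_eq_zero_iff_eq_C] at h
    rw [h] at hG ⊢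
    have : coeff 0 G ≠ 0 := fun h => hG (by rw [h, C_0])
    exact (isUnit_iff_ne_zero.mpr this).map C
  have hnu : ¬ IsUnit F := by
    intro hu
    have h1 := hu.map (eval (0 : Fin 4 → k))
    obtain ⟨M, rfl⟩ := quad_rep hF
    simp at h1
  rw [irreducible_iff] at hirr
  push Not at hirr
  obtain ⟨G, H, hGH, hG, hH⟩ := hirr hnu
  have hG0 : G ≠ 0 := by rintro rfl; simp at hGH; exact h0 hGH
  have hH0 : H ≠ 0 := by rintro rfl; simp at hGH; exact h0 hGH
  have hsum := totalDegree_mul_of_isDomain hG0 hH0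
  rw [← hGH, hdeg] at hsum
  have hG1 : G.totalDegree ≠ 0 := fun h => hG (unit_of G hG0 h)
  have hH1 : H.totalDegree ≠ 0 := fun h => hH (unit_of H hH0 h)
  have split : ∀ G : MvPolynomial (Fin 4) k, G.totalDegree = 1 →
      ∃ (g : k) (c : Fin 4 → k), G = C g + ∑ i, C (c i) * X i := by
    intro G h
    have := sum_homogeneousComponent G
    rw [h, Finset.sum_range_succ, Finset.sum_range_one, homogeneousComponent_zero] at this
    obtain ⟨c, hc⟩ := linear_rep (homogeneousComponent_isHomogeneous 1 G)
    exact ⟨coeff 0 G, c, by rw [← hc]; exact this.symm⟩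
  obtain ⟨g, c, rfl⟩ := split G (by omega)
  obtain ⟨h, d, rfl⟩ := split H (by omega)
  refine ⟨c, d, ?_⟩
  have lin : ∀ c : Fin 4 → k, (∑ i, C (c i) * X i : MvPolynomial (Fin 4) k).IsHomogeneous 1 :=
    fun c => IsHomogeneous.sum _ _ _ fun i _ => isHomogeneous_C_mul_X _ _
  have hc := lin c
  have hd := lin d
  set l := (∑ i, C (c i) * X i : MvPolynomial (Fin 4) k)
  set m := (∑ i, C (d i) * X i : MvPolynomial (Fin 4) k)
  have e : (C g + l) * (C h + m) = C (g * h) + (C g * m + C h * l) + l * m := by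
    rw [C_mul]; ring
  rw [e] at hGH
  have h2 := congrArg (homogeneousComponent 2) hGH
  rw [homogeneousComponent_eq_self hF, map_add, map_add,
    homogeneousComponent_of_mem (n := 0) (isHomogeneous_C _ _),
    homogeneousComponent_of_mem (n := 1) ((hd.C_mul g).add (hc.C_mul h)),
    homogeneousComponent_of_mem (n := 2) (hc.mul hd)] at h2
  simpa using h2

lemma lin_ne_zero_of {c : Fin 4 → k}
    (h : (∑ i, C (c i) * X i : MvPolynomial (Fin 4) k) ≠ 0) : c ≠ 0 := by
  rintro rfl; simp at h

lemma det_zero {c : Fin 4 → k} (hc : c ≠ 0) (v : Fin 4 → Fin 4 → k)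
    (h : ∀ r, ∑ i, c i * v r i = 0) : Matrix.det (Matrix.of v) = 0 := by
  rw [← Matrix.exists_mulVec_eq_zero_iff]
  refine ⟨c, hc, ?_⟩
  ext r
  simpa [Matrix.mulVec, dotProduct, mul_comm] using h r

lemma four_of_card {s : Finset (Fin 8)} (hs : 4 ≤ s.card) :
    ∃ f : Fin 4 → Fin 8, Function.Injective f ∧ ∀ r, f r ∈ s := by
  obtain ⟨t, hts, ht⟩ := Finset.exists_subset_card_eq hs
  exact ⟨t.orderEmbOfFin ht, (t.orderEmbOfFin ht).injective,
    fun r => hts (Finset.orderEmbOfFin_mem t ht r)⟩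

/-- The bilinear form of a matrix. -/
def bil {R : Type*} [CommRing R] (M : Fin 4 → Fin 4 → R) (u w : Fin 4 → R) : R := ∑ i, ∑ j, M i j * (u i * w j)

lemma bil_add_left {R : Type*} [CommRing R] (M : Fin 4 → Fin 4 → R) (u v w : Fin 4 → R) :
    bil M (u + v) w = bil M u w + bil M v w := by
  simp only [bil, Pi.add_apply, ← Finset.sum_add_distrib]
  exact Finset.sum_congr rfl fun i _ => Finset.sum_congr rfl fun j _ => by ring

lemma bil_add_right {R : Type*} [CommRing R] (M : Fin 4 → Fin 4 → R) (u v w : Fin 4 → R) :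
    bil M w (u + v) = bil M w u + bil M w v := by
  simp only [bil, Pi.add_apply, ← Finset.sum_add_distrib]
  exact Finset.sum_congr rfl fun i _ => Finset.sum_congr rfl fun j _ => by ring

lemma bil_smul_left {R : Type*} [CommRing R] (M : Fin 4 → Fin 4 → R) (c : R) (u w : Fin 4 → R) :
    bil M (c • u) w = c * bil M u w := by
  simp only [bil, Pi.smul_apply, smul_eq_mul, Finset.mul_sum]
  exact Finset.sum_congr rfl fun i _ => Finset.sum_congr rfl fun j _ => by ring

lemma bil_smul_right {R : Type*} [CommRing R] (M : Fin 4 → Fin 4 → R) (c : R) (u w : Fin 4 → R) :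
    bil M u (c • w) = c * bil M u w := by
  simp only [bil, Pi.smul_apply, smul_eq_mul, Finset.mul_sum]
  exact Finset.sum_congr rfl fun i _ => Finset.sum_congr rfl fun j _ => by ring

lemma eval_quad (M : Fin 4 → Fin 4 → k) (u : Fin 4 → k) :
    eval u (∑ i, ∑ j, C (M i j) * (X i * X j)) = bil M u u := by
  simp [bil]

lemma minor_ne {u w : Fin 4 → k} (hu : u ≠ 0) (hw : w ≠ 0) (h : ¬ ProjEq u w) :
    ∃ i j, u i * w j - u j * w i ≠ 0 := by
  by_contra hcon
  push Not at hcon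
  obtain ⟨i, hi⟩ := Function.ne_iff.mp hu
  simp only [Pi.zero_apply] at hi
  have e : w = (w i / u i) • u := by
    ext j
    simp only [Pi.smul_apply, smul_eq_mul]
    field_simp
    linear_combination hcon i j
  refine h ⟨w i / u i, ?_, e⟩
  intro h0
  rw [h0, zero_smul] at e
  exact hw e

lemma pair_indep {u w : Fin 4 → k} (hu : u ≠ 0) (hw : w ≠ 0) (h : ¬ ProjEq u w) (s t : k)
    (e : s • u + t • w = 0) : s = 0 ∧ t = 0 := by
  obtain ⟨i, j, hm⟩ := minor_ne hu hw h
  have ei := congrFun e i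
  have ej := congrFun e j
  simp only [Pi.add_apply, Pi.smul_apply, smul_eq_mul, Pi.zero_apply] at ei ej
  constructor
  · apply (mul_eq_zero.mp (?_ : s * (u i * w j - u j * w i) = 0)).resolve_right hm
    linear_combination w j * ei - w i * ej
  · apply (mul_eq_zero.mp (?_ : t * (u i * w j - u j * w i) = 0)).resolve_right hm
    linear_combination u i * ej - u j * ei

lemma no_line (Q : Fin 3 → MvPolynomial (Fin 4) k)
    (M : Fin 3 → Fin 4 → Fin 4 → k)
    (hM : ∀ m, Q m = ∑ i, ∑ j, C (M m i j) * (X i * X j))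
    (p : Fin 8 → (Fin 4 → k)) (hp0 : ∀ i, p i ≠ 0)
    (hdist : ∀ i j, i ≠ j → ¬ ProjEq (p i) (p j))
    (hzero : ∀ i m, bil (M m) (p i) (p i) = 0)
    (hall : ∀ q : Fin 4 → AlgebraicClosure k, q ≠ 0 →
      (∀ m, eval q (map (algebraMap k (AlgebraicClosure k)) (Q m)) = 0) →
      ∃ i, ProjEq (fun j => algebraMap k (AlgebraicClosure k) (p i j)) q)
    {i j : Fin 8} (hij : i ≠ j)
    (hB : ∀ m, bil (M m) (p i) (p j) + bil (M m) (p j) (p i) = 0) : False := by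
  obtain ⟨a, b, hm⟩ := minor_ne (hp0 i) (hp0 j) (hdist i j hij)
  let φ := algebraMap k (AlgebraicClosure k)
  have hm' : φ (p i a) * φ (p j b) - φ (p i b) * φ (p j a) ≠ 0 := by
    rw [← map_mul, ← map_mul, ← map_sub]
    exact (map_ne_zero φ).mpr hm
  let q : AlgebraicClosure k → Fin 4 → AlgebraicClosure k := fun t x => φ (p i x) + t * φ (p j x)
  have hq : ∀ t, ∃ l, ProjEq (fun x => φ (p l x)) (q t) := by
    intro t
    apply hall
    · intro h
      have ha := congrFun h a
      have hb := congrFun h b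
      simp only [q, Pi.zero_apply] at ha hb
      apply hm'
      linear_combination φ (p j b) * ha - φ (p j a) * hb
    · intro m
      have e1 := congrArg φ (hzero i m)
      have e2 := congrArg φ (hzero j m)
      have e3 := congrArg φ (hB m)
      simp only [bil, map_add, map_sum, map_mul, map_zero] at e1 e2 e3
      rw [hM m]
      simp only [map_sum, map_mul, map_C, map_X, eval_C, eval_X, q]
      have : ∀ x y : Fin 4, φ (M m x y) * ((φ (p i x) + t * φ (p j x)) * (φ (p i y) + t * φ (p j y)))
        = φ (M m x y) * (φ (p i x) * φ (p i y)) + t * (φ (M m x y) * (φ (p i x) * φ (p j y)))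
          + t * (φ (M m x y) * (φ (p j x) * φ (p i y)))
          + t ^ 2 * (φ (M m x y) * (φ (p j x) * φ (p j y))) := by intros; ring
      change ∑ x, ∑ y, φ (M m x y) * ((φ (p i x) + t * φ (p j x)) * (φ (p i y) + t * φ (p j y))) = 0
      simp only [this, Finset.sum_add_distrib, ← Finset.mul_sum]
      linear_combination e1 + t * e3 + t ^ 2 * e2
  choose f hf using hq
  obtain ⟨s, t, hst, hfst⟩ := Finite.exists_ne_map_eq_of_infinite f
  obtain ⟨c, hc, ec⟩ := hf s
  obtain ⟨d, hd, ed⟩ := hf t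
  rw [← hfst] at ed
  have key : ∀ x, d * (φ (p i x) + s * φ (p j x)) = c * (φ (p i x) + t * φ (p j x)) := by
    intro x
    have h1 := congrFun ec x
    have h2 := congrFun ed x
    simp only [q, Pi.smul_apply, smul_eq_mul] at h1 h2
    rw [h1, h2]; ring
  have ka := key a
  have kb := key b
  have h1 : d - c = 0 := by
    apply (mul_eq_zero.mp (?_ : (d - c) * (φ (p i a) * φ (p j b) - φ (p i b) * φ (p j a)) = 0)).resolve_right hm'
    linear_combination φ (p j b) * ka - φ (p j a) * kb
  have h2 : d * s - c * t = 0 := by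
    apply (mul_eq_zero.mp (?_ : (d * s - c * t) * (φ (p i a) * φ (p j b) - φ (p i b) * φ (p j a)) = 0)).resolve_right hm'
    linear_combination φ (p i a) * kb - φ (p i b) * ka
  have : d * (s - t) = 0 := by linear_combination h2 - t * h1
  exact hst (sub_eq_zero.mp ((mul_eq_zero.mp this).resolve_left hd))

lemma triple_indep (Q : Fin 3 → MvPolynomial (Fin 4) k)
    (M : Fin 3 → Fin 4 → Fin 4 → k)
    (hM : ∀ m, Q m = ∑ i, ∑ j, C (M m i j) * (X i * X j))
    (p : Fin 8 → (Fin 4 → k)) (hp0 : ∀ i, p i ≠ 0)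
    (hdist : ∀ i j, i ≠ j → ¬ ProjEq (p i) (p j))
    (hzero : ∀ i m, bil (M m) (p i) (p i) = 0)
    (hall : ∀ q : Fin 4 → AlgebraicClosure k, q ≠ 0 →
      (∀ m, eval q (map (algebraMap k (AlgebraicClosure k)) (Q m)) = 0) →
      ∃ i, ProjEq (fun j => algebraMap k (AlgebraicClosure k) (p i j)) q)
    {i j l : Fin 8} (hij : i ≠ j) (hil : i ≠ l) (hjl : j ≠ l) (r s t : k)
    (e : r • p i + s • p j + t • p l = 0) : r = 0 ∧ s = 0 ∧ t = 0 := by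
  by_cases ht : t = 0
  · subst ht
    obtain ⟨h1, h2⟩ := pair_indep (hp0 i) (hp0 j) (hdist i j hij) r s (by simpa using e)
    exact ⟨h1, h2, rfl⟩
  exfalso
  by_cases hr : r = 0
  · subst hr
    exact ht (pair_indep (hp0 j) (hp0 l) (hdist j l hjl) s t (by simpa using e)).2
  by_cases hs : s = 0
  · subst hs
    exact ht (pair_indep (hp0 i) (hp0 l) (hdist i l hil) r t (by simpa using e)).2
  refine no_line Q M hM p hp0 hdist hzero hall hij fun m => ?_
  have e2 : r • p i + s • p j = (-t) • p l := by
    rw [neg_smul]; exact eq_neg_of_add_eq_zero_left e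
  have e3 : bil (M m) (r • p i + s • p j) (r • p i + s • p j) = 0 := by
    rw [e2, bil_smul_left, bil_smul_right, hzero]; simp
  simp only [bil_add_left, bil_add_right, bil_smul_left, bil_smul_right, hzero] at e3
  apply (mul_eq_zero.mp (?_ : (r * s) * _ = 0)).resolve_left (mul_ne_zero hr hs)
  linear_combination e3

lemma exists_reducible (Q : Fin 3 → MvPolynomial (Fin 4) k)
    (M : Fin 3 → Fin 4 → Fin 4 → k)
    (hM : ∀ m, Q m = ∑ i, ∑ j, C (M m i j) * (X i * X j))
    (p : Fin 8 → (Fin 4 → k)) (hp0 : ∀ i, p i ≠ 0)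
    (hdist : ∀ i j, i ≠ j → ¬ ProjEq (p i) (p j))
    (hzero : ∀ i m, bil (M m) (p i) (p i) = 0)
    (hall : ∀ q : Fin 4 → AlgebraicClosure k, q ≠ 0 →
      (∀ m, eval q (map (algebraMap k (AlgebraicClosure k)) (Q m)) = 0) →
      ∃ i, ProjEq (fun j => algebraMap k (AlgebraicClosure k) (p i j)) q)
    {i j l n : Fin 8} (hij : i ≠ j) (hil : i ≠ l) (hin : i ≠ n)
    (hjl : j ≠ l) (hjn : j ≠ n) (hln : l ≠ n)
    (hdet : Matrix.det (Matrix.of ![p i, p j, p l, p n]) = 0) :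
    ∃ a : Fin 3 → k, a ≠ 0 ∧
      bil (fun x y => ∑ m, a m * M m x y) (p i) (p j)
        + bil (fun x y => ∑ m, a m * M m x y) (p j) (p i) = 0 ∧
      bil (fun x y => ∑ m, a m * M m x y) (p i) (p l)
        + bil (fun x y => ∑ m, a m * M m x y) (p l) (p i) = 0 ∧
      bil (fun x y => ∑ m, a m * M m x y) (p j) (p l)
        + bil (fun x y => ∑ m, a m * M m x y) (p l) (p j) = 0 := by
  have bil_sum : ∀ (a : Fin 3 → k) u w,
      bil (fun x y => ∑ m, a m * M m x y) u w = ∑ m, a m * bil (M m) u w := by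
    intro a u w
    simp only [bil, Fin.sum_univ_three, Finset.mul_sum, ← Finset.sum_add_distrib]
    exact Finset.sum_congr rfl fun i _ => Finset.sum_congr rfl fun j _ => by ring
  obtain ⟨c, hc, hcv⟩ := Matrix.exists_vecMul_eq_zero_iff.mpr hdet
  have hrel : c 0 • p i + c 1 • p j + c 2 • p l + c 3 • p n = 0 := by
    ext x
    have := congrFun hcv x
    simpa [Matrix.vecMul, dotProduct, Fin.sum_univ_four] using this
  have T := @triple_indep k _ Q M hM p hp0 hdist hzero hall
  have h3 : c 3 ≠ 0 := by
    intro h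
    obtain ⟨h0, h1, h2⟩ := T hij hil hjl (c 0) (c 1) (c 2) (by simpa [h] using hrel)
    apply hc; ext x; fin_cases x <;> assumption
  have h1 : c 1 ≠ 0 := by
    intro h
    exact h3 (T hil hin hln (c 0) (c 2) (c 3) (by simpa [h] using hrel)).2.2
  have h2 : c 2 ≠ 0 := by
    intro h
    exact h3 (T hij hin hjn (c 0) (c 1) (c 3) (by simpa [h] using hrel)).2.2
  let A : Matrix (Fin 2) (Fin 3) k := Matrix.of ![
    fun m => bil (M m) (p i) (p j) + bil (M m) (p j) (p i),
    fun m => bil (M m) (p i) (p l) + bil (M m) (p l) (p i)]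
  have hker : LinearMap.ker (Matrix.toLin' A) ≠ ⊥ :=
    LinearMap.ker_ne_bot_of_finrank_lt (by simp)
  obtain ⟨a, ha, ha0⟩ := Submodule.exists_mem_ne_zero_of_ne_bot hker
  rw [LinearMap.mem_ker, Matrix.toLin'_apply] at ha
  have hA0 := congrFun ha 0
  have hA1 := congrFun ha 1
  simp [A, Matrix.mulVec, dotProduct, Fin.sum_univ_three] at hA0 hA1
  have E1 : bil (fun x y => ∑ m, a m * M m x y) (p i) (p j)
        + bil (fun x y => ∑ m, a m * M m x y) (p j) (p i) = 0 := by
    rw [bil_sum, bil_sum, Fin.sum_univ_three, Fin.sum_univ_three]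
    linear_combination hA0
  have E2 : bil (fun x y => ∑ m, a m * M m x y) (p i) (p l)
        + bil (fun x y => ∑ m, a m * M m x y) (p l) (p i) = 0 := by
    rw [bil_sum, bil_sum, Fin.sum_univ_three, Fin.sum_univ_three]
    linear_combination hA1
  refine ⟨a, ha0, E1, E2, ?_⟩
  have Z : ∀ i, bil (fun x y => ∑ m, a m * M m x y) (p i) (p i) = 0 := by
    intro i; rw [bil_sum]; simp [hzero]
  set N : Fin 4 → Fin 4 → k := fun x y => ∑ m, a m * M m x y
  have e2 : c 0 • p i + c 1 • p j + c 2 • p l = (-c 3) • p n := by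
    rw [neg_smul]; exact eq_neg_of_add_eq_zero_left hrel
  have e3 : bil N (c 0 • p i + c 1 • p j + c 2 • p l) (c 0 • p i + c 1 • p j + c 2 • p l) = 0 := by
    rw [e2, bil_smul_left, bil_smul_right, Z]; simp
  simp only [bil_add_left, bil_add_right, bil_smul_left, bil_smul_right, Z] at e3
  apply (mul_eq_zero.mp (?_ : (c 1 * c 2) * _ = 0)).resolve_left (mul_ne_zero h1 h2)
  linear_combination e3 - c 0 * c 1 * E1 - c 0 * c 2 * E2

lemma not_irred_of_plane (N : Fin 4 → Fin 4 → k) (u v w : Fin 4 → k)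
    (hind : ∀ r s t : k, r • u + s • v + t • w = 0 → r = 0 ∧ s = 0 ∧ t = 0)
    (huu : bil N u u = 0) (hvv : bil N v v = 0) (hww : bil N w w = 0)
    (huv : bil N u v + bil N v u = 0) (huw : bil N u w + bil N w u = 0)
    (hvw : bil N v w + bil N w v = 0) :
    ¬ Irreducible (∑ i, ∑ j, C (N i j) * (X i * X j) : MvPolynomial (Fin 4) k) := by
  have hli : LinearIndependent k ![u, v, w] := by
    rw [Fintype.linearIndependent_iff]
    intro g hg
    rw [Fin.sum_univ_three] at hg
    obtain ⟨h0, h1, h2⟩ := hind (g 0) (g 1) (g 2) (by simpa using hg)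
    intro i; fin_cases i <;> assumption
  have hspan : Submodule.span k (Set.range ![u, v, w]) ≠ ⊤ := by
    intro h
    have := finrank_span_eq_card hli
    rw [h] at this
    simp at this
  obtain ⟨z, hz⟩ : ∃ z, z ∉ Submodule.span k (Set.range ![u, v, w]) := by
    by_contra hcon
    push Not at hcon
    exact hspan (Submodule.eq_top_iff'.mpr hcon)
  have hli4 : LinearIndependent k (Fin.snoc ![u, v, w] z : Fin 4 → Fin 4 → k) :=
    linearIndependent_finSnoc.mpr ⟨hli, hz⟩
  have hsn : (Fin.snoc ![u, v, w] z : Fin 4 → Fin 4 → k) = ![u, v, w, z] := by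
    ext i x; fin_cases i <;> rfl
  rw [hsn] at hli4
  let B : Matrix (Fin 4) (Fin 4) k := Matrix.of ![u, v, w, z]
  have hB : IsUnit B := Matrix.linearIndependent_rows_iff_isUnit.mp hli4
  have hDB : B⁻¹ * B = 1 := Matrix.nonsing_inv_mul B ((Matrix.isUnit_iff_isUnit_det B).mp hB)
  let L : Fin 4 → MvPolynomial (Fin 4) k := fun r => ∑ j, C (B⁻¹ j r) * X j
  have hX : ∀ i, (X i : MvPolynomial (Fin 4) k) = ∑ r, C (B r i) * L r := by
    intro i
    have h1 : ∀ j, ∑ r, B⁻¹ j r * B r i = if j = i then 1 else 0 := by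
      intro j
      have := congrFun (congrFun hDB j) i
      rwa [Matrix.mul_apply, Matrix.one_apply] at this
    calc (X i : MvPolynomial (Fin 4) k) = ∑ j, C (if j = i then (1 : k) else 0) * X j := by
          simp [apply_ite C]
      _ = ∑ j, C (∑ r, B⁻¹ j r * B r i) * X j := by simp only [h1]
      _ = ∑ j, ∑ r, C (B r i) * (C (B⁻¹ j r) * X j) := by
          refine Finset.sum_congr rfl fun j _ => ?_
          rw [map_sum, Finset.sum_mul]
          refine Finset.sum_congr rfl fun r _ => ?_
          rw [C_mul]; ring
      _ = ∑ r, C (B r i) * L r := by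
          rw [Finset.sum_comm]
          simp only [L, Finset.mul_sum]
  let P : (Fin 4 → k) → Fin 4 → MvPolynomial (Fin 4) k := fun a i => C (a i)
  let N' : Fin 4 → Fin 4 → MvPolynomial (Fin 4) k := fun i j => C (N i j)
  have hP : ∀ a b, bil N' (P a) (P b) = C (bil N a b) := by
    intro a b
    simp [bil, N', P]
  have hXX : (X : Fin 4 → MvPolynomial (Fin 4) k) =
      L 0 • P u + L 1 • P v + L 2 • P w + L 3 • P z := by
    ext1 i
    rw [hX i, Fin.sum_univ_four]
    simp only [B, P, Pi.add_apply, Pi.smul_apply, smul_eq_mul, Matrix.of_apply,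
      Matrix.cons_val_zero, Matrix.cons_val_one, Matrix.cons_val]
    ring
  have hfac : (∑ i, ∑ j, C (N i j) * (X i * X j) : MvPolynomial (Fin 4) k) =
      L 3 * (L 0 * C (bil N u z + bil N z u) + L 1 * C (bil N v z + bil N z v)
        + L 2 * C (bil N w z + bil N z w) + L 3 * C (bil N z z)) := by
    have h : (∑ i, ∑ j, C (N i j) * (X i * X j) : MvPolynomial (Fin 4) k) = bil N' X X := rfl
    rw [h, hXX]
    simp only [bil_add_left, bil_add_right, bil_smul_left, bil_smul_right, hP, huu, hvv, hww,
      C_0]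
    have e1 := congrArg (C (σ := Fin 4)) huv
    have e2 := congrArg (C (σ := Fin 4)) huw
    have e3 := congrArg (C (σ := Fin 4)) hvw
    simp only [C_add, C_0] at e1 e2 e3 ⊢
    linear_combination L 0 * L 1 * e1 + L 0 * L 2 * e2 + L 1 * L 2 * e3
  have hL : ∀ r, eval (0 : Fin 4 → k) (L r) = 0 := by
    intro r; simp [L]
  have hnu : ∀ G : MvPolynomial (Fin 4) k, eval (0 : Fin 4 → k) G = 0 → ¬ IsUnit G := by
    intro G h hu
    have := hu.map (eval (0 : Fin 4 → k))
    rw [h] at this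
    exact not_isUnit_zero this
  intro hirr
  rcases hirr.isUnit_or_isUnit hfac with h | h
  · exact hnu _ (hL 3) h
  · exact hnu _ (by simp only [map_add, map_mul, hL, zero_mul, add_zero]) h

end NetQ

/-- Let `p₁, …, p₈` be 8 distinct rational points of `ℙ³` over `k` which are the transverse
intersection of three quadrics `Q₁, Q₂, Q₃` (these being all the intersection points over the
algebraic closure).  Then no four of the points lie on a plane if and only if every nonzero
quadric in the net spanned by `Q₁, Q₂, Q₃` is irreducible. -/
theorem net_of_quadrics_irreducible_iff_no_coplanar_quadruple
    {k : Type*} [Field k]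
    (Q : Fin 3 → MvPolynomial (Fin 4) k)
    (hQ : ∀ m, (Q m).IsHomogeneous 2)
    (p : Fin 8 → (Fin 4 → k)) (hp0 : ∀ i, p i ≠ 0)
    (hdist : ∀ i j, i ≠ j → ¬ ProjEq (p i) (p j))
    (hzero : ∀ i m, eval (p i) (Q m) = 0)
    (hall : ∀ q : Fin 4 → AlgebraicClosure k, q ≠ 0 →
      (∀ m, eval q (map (algebraMap k (AlgebraicClosure k)) (Q m)) = 0) →
      ∃ i, ProjEq (fun j => algebraMap k (AlgebraicClosure k) (p i j)) q)
    (htrans : ∀ i, LinearIndependent k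
      ![fun a => eval (p i) (pderiv a (Q 0)),
        fun a => eval (p i) (pderiv a (Q 1)),
        fun a => eval (p i) (pderiv a (Q 2))]) :
    (∀ i j l m : Fin 8, i ≠ j → i ≠ l → i ≠ m → j ≠ l → j ≠ m → l ≠ m →
        Matrix.det (Matrix.of ![p i, p j, p l, p m]) ≠ 0) ↔
    (∀ a : Fin 3 → k, a ≠ 0 → Irreducible (∑ m, a m • Q m)) := by
  constructor
  · intro hcop a ha
    by_contra hirr
    have hF : (∑ m, a m • Q m).IsHomogeneous 2 :=
      IsHomogeneous.sum _ _ _ fun m _ => by rw [smul_eq_C_mul]; exact (hQ m).C_mul _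
    have hF0 : (∑ m, a m • Q m) ≠ 0 := by
      intro h0
      have := Fintype.linearIndependent_iff.mp (htrans 0) a (by
        ext x
        have := congrArg (fun F => eval (p 0) (pderiv x F)) h0
        simpa [Fin.sum_univ_three, smul_eval] using this)
      exact ha (funext this)
    obtain ⟨c, d, hcd⟩ := NetQ.factor hF hF0 hirr
    have hc : c ≠ 0 := NetQ.lin_ne_zero_of (by intro h; rw [h, zero_mul] at hcd; exact hF0 hcd)
    have hd : d ≠ 0 := NetQ.lin_ne_zero_of (by intro h; rw [h, mul_zero] at hcd; exact hF0 hcd)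
    have hor : ∀ i, ∑ x, c x * p i x = 0 ∨ ∑ x, d x * p i x = 0 := by
      intro i
      have := congrArg (eval (p i)) hcd
      rw [← mul_eq_zero]
      simpa [hzero, smul_eval, eq_comm] using this
    classical
    have fin : ∀ e : Fin 4 → k, e ≠ 0 →
        4 ≤ (Finset.univ.filter fun i : Fin 8 => ∑ x, e x * p i x = 0).card → False := by
      intro e he hcard
      obtain ⟨f, hf, hfs⟩ := NetQ.four_of_card hcard
      have hne : ∀ a b : Fin 4, a ≠ b → f a ≠ f b := fun a b h => hf.ne h
      refine hcop (f 0) (f 1) (f 2) (f 3) (hne _ _ (by decide)) (hne _ _ (by decide))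
        (hne _ _ (by decide)) (hne _ _ (by decide)) (hne _ _ (by decide)) (hne _ _ (by decide)) ?_
      apply NetQ.det_zero he
      intro r
      have h := fun r => (Finset.mem_filter.mp (hfs r)).2
      fin_cases r
      · exact h 0
      · exact h 1
      · exact h 2
      · exact h 3
    have hcard : (Finset.univ : Finset (Fin 8)).card ≤
        (Finset.univ.filter fun i : Fin 8 => ∑ x, c x * p i x = 0).card +
        (Finset.univ.filter fun i : Fin 8 => ∑ x, d x * p i x = 0).card := by
      refine le_trans (Finset.card_le_card ?_) (Finset.card_union_le _ _)
      intro i _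
      simpa using hor i
    simp only [Finset.card_univ, Fintype.card_fin] at hcard
    by_cases h4 : 4 ≤ (Finset.univ.filter fun i : Fin 8 => ∑ x, c x * p i x = 0).card
    · exact fin c hc h4
    · exact fin d hd (by omega)
  · intro hirr i j l n hij hil hin hjl hjn hln hdet
    choose M hM using fun m => NetQ.quad_rep (hQ m)
    have hz : ∀ i m, NetQ.bil (M m) (p i) (p i) = 0 := by
      intro i m
      rw [← NetQ.eval_quad, ← hM]; exact hzero i m
    obtain ⟨a, ha, h1, h2, h3⟩ := NetQ.exists_reducible Q M hM p hp0 hdist hz hall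
      hij hil hin hjl hjn hln hdet
    have hsum : (∑ m, a m • Q m) =
        ∑ x, ∑ y, C (∑ m, a m * M m x y) * (X x * X y) := by
      simp only [hM, Fin.sum_univ_three, smul_eq_C_mul, Finset.mul_sum, ← Finset.sum_add_distrib]
      refine Finset.sum_congr rfl fun i _ => Finset.sum_congr rfl fun j _ => ?_
      simp only [C_add, C_mul]; ring
    have hZ : ∀ i, NetQ.bil (fun x y => ∑ m, a m * M m x y) (p i) (p i) = 0 := by
      intro i
      rw [← NetQ.eval_quad, ← hsum]
      simp [smul_eval, hzero]
    have := hirr a ha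
    rw [hsum] at this
    exact NetQ.not_irred_of_plane _ (p i) (p j) (p l)
      (NetQ.triple_indep Q M hM p hp0 hdist hz hall hij hil hjl)
      (hZ i) (hZ j) (hZ l) h1 h2 h3 this
end
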